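/- arXiv:2511.19309 — 3 statements merged into one kernel-verified Lean document; each statement's English description precedes it below -/
import Mathlib

section
/- Let d ≥ 2 and 0 < α < d−1. The α-Riesz perimeter 𝒫^α is submodular: for all E, F ∈ 𝔐 one has 𝒫^α(E ∪ F) + 𝒫^α(E ∩ F) ≤ 𝒫^α(E) + 𝒫^α(F). -/
open MeasureTheory Filter Set
open scoped ENNReal

noncomputable section

/-- The flat torus `𝕋^{d-1}`. -/
abbrev Torus (d : ℕ) : Type := Fin (d-1) → AddCircle (1:ℝ)

/-- The periodic strip `𝕋^{d-1} × ℝ`. -/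
abbrev Cyl (d : ℕ) : Type := Torus d × ℝ

/-- The subgraph of a function `g : 𝕋^{d-1} → ℝ`. -/
def subgraph (d : ℕ) (g : Torus d → ℝ) : Set (Cyl d) := {x | x.2 ≤ g x.1}

/-- The class `𝔠_L` of periodic `L`-Lipschitz subgraphs. -/
def LipClass (d : ℕ) (L : ℝ) : Set (Set (Cyl d)) :=
  {E | ∃ g : Torus d → ℝ, LipschitzWith (Real.toNNReal L) g ∧ E = subgraph d g}

/-- The slab `𝕊^d_R = 𝕋^{d-1} × (-R, R)`. -/
def SlabR (d : ℕ) (R : ℝ) : Set (Cyl d) := {x | -R < x.2 ∧ x.2 < R}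

/-- The class `𝔐_R` of measurable sets squeezed between two halfspaces. -/
def MR (d : ℕ) (R : ℝ) : Set (Set (Cyl d)) :=
  {E | MeasurableSet E ∧ {x : Cyl d | x.2 < -R} ⊆ E ∧ E ⊆ {x : Cyl d | x.2 < R}}

/-- The periodic halfspace `H_λ = 𝕋^{d-1} × (-∞, λ)`. -/
def halfspace (d : ℕ) (lam : ℝ) : Set (Cyl d) := {x | x.2 < lam}

/-- Translation of `𝕋^{d-1} × ℝ` by a vector `τ ∈ ℝ^d = ℝ^{d-1} × ℝ`,
acting through the quotient. -/
def translCyl (d : ℕ) (τ : (Fin (d-1) → ℝ) × ℝ) (x : Cyl d) : Cyl d :=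
  (fun i => x.1 i + (τ.1 i : AddCircle (1:ℝ)), x.2 + τ.2)

/-- The periodic norm `‖ξ‖_♯ = (|ξ_d|² + min_{z'∈ℤ^{d-1}} |ξ̃' + z'|²)^{1/2}`. -/
def pnorm (d : ℕ) (ξ : Cyl d) : ℝ := Real.sqrt (ξ.2 ^ 2 + ∑ i, ‖ξ.1 i‖ ^ 2)

/-- The Riesz interaction `𝒥^α(E,F) = ∫_E ∫_F ‖x-y‖_♯^{-(d-α)} dy dx`. -/
def Jalpha (d : ℕ) (α : ℝ) (E F : Set (Cyl d)) : ℝ≥0∞ :=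
  ∫⁻ x in E, ∫⁻ y in F, (ENNReal.ofReal (pnorm d (x - y))) ^ (-((d : ℝ) - α)) ∂volume ∂volume

/-- The slab `𝕊^d_{R₁,R₂} = 𝕋^{d-1} × (R₁, R₂)`. -/
def slab2 (d : ℕ) (R₁ R₂ : ℝ) : Set (Cyl d) := {x | R₁ < x.2 ∧ x.2 < R₂}

/-- `𝒫^α_{R₁,R₂}(E) = 𝒥^α(𝕊,𝕊) - 𝒥^α(E∩𝕊, E∩𝕊)`. -/
def PalphaSlab (d : ℕ) (α R₁ R₂ : ℝ) (E : Set (Cyl d)) : ℝ≥0∞ :=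
  Jalpha d α (slab2 d R₁ R₂) (slab2 d R₁ R₂)
    - Jalpha d α (E ∩ slab2 d R₁ R₂) (E ∩ slab2 d R₁ R₂)

/-- `ρ_E < +∞`, i.e. `E` is contained in some halfspace `𝕋^{d-1} × (-∞, ρ)`. -/
def BddTop (d : ℕ) (E : Set (Cyl d)) : Prop := ∃ ρ : ℝ, E ⊆ {x : Cyl d | x.2 < ρ}

/-- `ρ_E = inf {ρ : E ⊆ 𝕋^{d-1} × (-∞, ρ)}`. -/
def rhoSup (d : ℕ) (E : Set (Cyl d)) : ℝ := sInf {ρ : ℝ | E ⊆ {x : Cyl d | x.2 < ρ}}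

open Classical in
/-- The `α`-Riesz perimeter `𝒫^α` (the limits in `R` exist by monotonicity, so they
coincide with the `limsup`). -/
def Palpha (d : ℕ) (α : ℝ) (E : Set (Cyl d)) : ℝ≥0∞ :=
  if E = ∅ then 0
  else if BddTop d E then limsup (fun R : ℝ => PalphaSlab d α (-R) (rhoSup d E) E) atTop
  else limsup (fun R : ℝ => PalphaSlab d α (-R) R E) atTop

/-! Write `ν` for the measure `‖x - y‖_♯^{-(d-α)} dx dy` on pairs of points and `H_E` for the
smallest halfspace containing `E`. The slabs `S` in the definition of `𝒫^α` have finite `ν (S × S)`,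
because the kernel is locally integrable for `α > 0`, and they increase to `H_E`; hence
`𝒫^α(E) = ν (H_E × H_E \ E × E)`. Submodularity is now an inclusion of sets: `H_E` and `H_F` are
nested and `H_{E ∪ F}` is the larger one, so the two sets of pairs on the left-hand side have union
and intersection contained in those of the two sets on the right-hand side. -/

open scoped Pointwise Topology

section SetsOfPairs

variable {X Ω ι : Type*} [MeasurableSpace X] [MeasurableSpace Ω]

theorem measure_add_measure_le_of_union_inter_subset {ν : Measure Ω} {s t u v : Set Ω}
    (ht : NullMeasurableSet t ν) (hv : NullMeasurableSet v ν)
    (hunion : s ∪ t ⊆ u ∪ v) (hinter : s ∩ t ⊆ u ∩ v) :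
    ν s + ν t ≤ ν u + ν v := by
  rw [← measure_union_add_inter₀ s ht, ← measure_union_add_inter₀ u hv]
  exact add_le_add (measure_mono hunion) (measure_mono hinter)

theorem measure_prod_self_sdiff_submodular {ν : Measure (X × X)} {E F A B U I : Set X}
    (hI : NullMeasurableSet (I ×ˢ I \ (E ∩ F) ×ˢ (E ∩ F)) ν)
    (hB : NullMeasurableSet (B ×ˢ B \ F ×ˢ F) ν)
    (hU : U ⊆ A ∨ U ⊆ B) (hIA : I ⊆ A) (hIB : I ⊆ B) :
    ν (U ×ˢ U \ (E ∪ F) ×ˢ (E ∪ F)) + ν (I ×ˢ I \ (E ∩ F) ×ˢ (E ∩ F)) ≤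
      ν (A ×ˢ A \ E ×ˢ E) + ν (B ×ˢ B \ F ×ˢ F) := by
  refine measure_add_measure_le_of_union_inter_subset hI hB (union_subset ?_ ?_) ?_
  · have sdiff_union_subset {C G : Set X} (hUC : U ⊆ C) (hG : G ⊆ E ∪ F) :
        U ×ˢ U \ (E ∪ F) ×ˢ (E ∪ F) ⊆ C ×ˢ C \ G ×ˢ G :=
      sdiff_subset_sdiff (prod_mono hUC hUC) (prod_mono hG hG)
    rcases hU with hUA | hUB
    · exact (sdiff_union_subset hUA subset_union_left).trans subset_union_left
    · exact (sdiff_union_subset hUB subset_union_right).trans subset_union_right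
  · rw [← prod_inter_prod, sdiff_inter]
    exact union_subset_union (sdiff_subset_sdiff_left (prod_mono hIA hIA))
      (sdiff_subset_sdiff_left (prod_mono hIB hIB))
  · rintro ⟨x, y⟩ ⟨⟨-, notMem_union⟩, ⟨hx, hy⟩, -⟩
    exact ⟨⟨⟨hIA hx, hIA hy⟩, fun h ↦ notMem_union ⟨.inl h.1, .inl h.2⟩⟩,
      ⟨⟨hIB hx, hIB hy⟩, fun h ↦ notMem_union ⟨.inr h.1, .inr h.2⟩⟩⟩

theorem measure_prod_self_sub_inter {ν : Measure (X × X)} {S E : Set X}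
    (hES : NullMeasurableSet ((E ∩ S) ×ˢ (E ∩ S)) ν) (hS : ν (S ×ˢ S) ≠ ∞) :
    ν (S ×ˢ S) - ν ((E ∩ S) ×ˢ (E ∩ S)) = ν (S ×ˢ S \ E ×ˢ E) := by
  have hsub : (E ∩ S) ×ˢ (E ∩ S) ⊆ S ×ˢ S := prod_mono inter_subset_right inter_subset_right
  rw [← measure_sdiff hsub hES (measure_ne_top_of_subset hsub hS), ← prod_inter_prod,
    sdiff_inter, sdiff_self, union_empty]

theorem tendsto_measure_prod_self_sdiff [SemilatticeSup ι]
    [IsCountablyGenerated (atTop : Filter ι)] (ν : Measure (X × X)) {S : ι → Set X}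
    (hS : Monotone S) (T : Set (X × X)) :
    Tendsto (fun i ↦ ν (S i ×ˢ S i \ T)) atTop (𝓝 (ν ((⋃ i, S i) ×ˢ (⋃ i, S i) \ T))) := by
  rw [← iUnion_prod_of_monotone hS hS, iUnion_sdiff]
  exact tendsto_measure_iUnion_atTop fun _ _ hij ↦
    sdiff_subset_sdiff_left (prod_mono (hS hij) (hS hij))

end SetsOfPairs

theorem setLIntegral_prod_comp_sub_le {G : Type*} [AddGroup G] [MeasurableSpace G]
    [MeasurableAdd G] [MeasurableSub₂ G] {μ : Measure G} [SFinite μ] [μ.IsAddRightInvariant]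
    {f : G → ℝ≥0∞} (hf : Measurable f) (A : Set G) {B : Set G} (hB : MeasurableSet B) :
    ∫⁻ z in A ×ˢ B, f (z.1 - z.2) ∂μ.prod μ ≤ (∫⁻ x in A - B, f x ∂μ) * μ B := by
  have translate (y : G) (hy : y ∈ B) : ∫⁻ x in A, f (x - y) ∂μ ≤ ∫⁻ x in A - B, f x ∂μ := by
    rw [← (measurePreserving_sub_right μ y).setLIntegral_comp_preimage_emb
      (MeasurableEquiv.subRight y).measurableEmbedding f (A - B)]
    exact lintegral_mono_set fun x hx ↦ sub_mem_sub hx hy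
  rw [← Measure.prod_restrict, lintegral_prod_symm _ (by fun_prop), ← setLIntegral_const]
  exact setLIntegral_mono' hB translate

theorem measurePreserving_pi_coe_addCircle {ι : Type*} [Fintype ι] (T : ℝ) [Fact (0 < T)] (t : ℝ) :
    MeasurePreserving (fun (x : ι → ℝ) i ↦ (x i : AddCircle T))
      (volume.restrict (univ.pi fun _ ↦ Ioc t (t + T))) := by
  rw [volume_pi, volume_pi, Measure.restrict_pi_pi]
  exact measurePreserving_pi _ _ fun _ ↦ AddCircle.measurePreserving_mk T t

theorem integrableOn_norm_rpow_neg {V : Type*} [NormedAddCommGroup V] [NormedSpace ℝ V]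
    [FiniteDimensional ℝ V] [Nontrivial V] [MeasurableSpace V] [BorelSpace V] {μ : Measure V}
    [μ.IsAddHaarMeasure] {s : ℝ} (hs : s < Module.finrank ℝ V) {B : Set V}
    (hB : Bornology.IsBounded B) : IntegrableOn (fun x ↦ ‖x‖ ^ (-s)) B μ := by
  obtain ⟨r, hBr⟩ := hB.subset_ball 0
  have norm_le (x : V) : ‖‖x‖ ^ (-s)‖ ≤ 1 * ‖x‖ ^ (-s) := by
    rw [one_mul, Real.norm_of_nonneg (by positivity)]
  exact (integrableOn_ball_of_norm_le_rpow Module.finrank_pos hs (.of_forall norm_le)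
    (measurable_norm.pow_const _).aestronglyMeasurable).mono_set hBr

section Slab

variable {d : ℕ} {a b a' b' : ℝ}

theorem slab2_eq_univ_prod_Ioo (d : ℕ) (a b : ℝ) : slab2 d a b = univ ×ˢ Ioo a b := by
  ext x
  simp [slab2]

theorem measurableSet_slab2 : MeasurableSet (slab2 d a b) := by
  rw [slab2_eq_univ_prod_Ioo]
  exact MeasurableSet.univ.prod measurableSet_Ioo

theorem volume_slab2_lt_top : volume (slab2 d a b) < ∞ := by
  rw [slab2_eq_univ_prod_Ioo, Measure.volume_eq_prod, Measure.prod_prod]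
  exact ENNReal.mul_lt_top (measure_lt_top _ _) measure_Ioo_lt_top

theorem slab2_subset_slab2 (ha : a' ≤ a) (hb : b ≤ b') : slab2 d a b ⊆ slab2 d a' b' :=
  fun _ hx ↦ ⟨ha.trans_lt hx.1, hx.2.trans_le hb⟩

theorem slab2_sub_slab2_subset : slab2 d a b - slab2 d a b ⊆ slab2 d (-(b - a)) (b - a) := by
  rintro _ ⟨x, hx, y, hy, rfl⟩
  constructor <;> simp only [Prod.snd_sub] <;> linarith [hx.1, hx.2, hy.1, hy.2]

theorem iUnion_slab2_neg_left (d : ℕ) (b : ℝ) : ⋃ R : ℝ, slab2 d (-R) b = halfspace d b := by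
  ext x
  simp only [mem_iUnion]
  exact ⟨fun ⟨_, hx⟩ ↦ hx.2, fun hx ↦ ⟨1 - x.2, by linarith, hx⟩⟩

theorem iUnion_slab2_neg_self (d : ℕ) : ⋃ R : ℝ, slab2 d (-R) R = univ := by
  refine eq_univ_of_forall fun x ↦ mem_iUnion.2 ⟨|x.2| + 1, ?_, ?_⟩
  · linarith [neg_abs_le x.2]
  · linarith [le_abs_self x.2]

theorem setLIntegral_slab2 {f : Cyl d → ℝ≥0∞} (hf : Measurable f) (a b : ℝ) :
    ∫⁻ ξ in slab2 d a b, f ξ =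
      ∫⁻ z in univ.pi (fun _ : Fin (d - 1) ↦ Ioc (-(1 / 2) : ℝ) (1 / 2)) ×ˢ Ioo a b,
        f (fun i ↦ (z.1 i : AddCircle (1 : ℝ)), z.2) := by
  have fundamental_domain :=
    measurePreserving_pi_coe_addCircle (ι := Fin (d - 1)) 1 (-(1 / 2))
  rw [show -(1 / 2) + 1 = (1 / 2 : ℝ) by norm_num] at fundamental_domain
  rw [slab2_eq_univ_prod_Ioo, Measure.volume_eq_prod, Measure.volume_eq_prod,
    ← Measure.prod_restrict, ← Measure.prod_restrict, Measure.restrict_univ]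
  exact ((fundamental_domain.prod (.id _)).lintegral_comp hf).symm

instance isAddHaarMeasure_volume_cyl (d : ℕ) : (volume : Measure (Cyl d)).IsAddHaarMeasure := by
  have : (volume : Measure (Torus d)).IsAddHaarMeasure := by
    rw [volume_pi]
    infer_instance
  rw [Measure.volume_eq_prod]
  infer_instance

end Slab

section Kernel

/-- The Riesz kernel `ξ ↦ ‖ξ‖_♯^{-(d-α)}` integrated in `Jalpha`. -/
def rieszKernel (d : ℕ) (α : ℝ) (ξ : Cyl d) : ℝ≥0∞ :=
  ENNReal.ofReal (pnorm d ξ) ^ (-((d : ℝ) - α))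

variable {d : ℕ} {α : ℝ}

theorem continuous_rieszKernel : Continuous (rieszKernel d α) := by
  have : Continuous (pnorm d) := by unfold pnorm; fun_prop
  exact ENNReal.continuous_rpow_const.comp (ENNReal.continuous_ofReal.comp this)

theorem norm_le_pnorm_coe {z : (Fin (d - 1) → ℝ) × ℝ} (hz : ∀ i, |z.1 i| ≤ 1 / 2) :
    ‖z‖ ≤ pnorm d (fun i ↦ (z.1 i : AddCircle (1 : ℝ)), z.2) := by
  have norm_coe (i : Fin (d - 1)) : ‖(z.1 i : AddCircle (1 : ℝ))‖ = |z.1 i| :=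
    (AddCircle.norm_coe_eq_abs_iff 1 one_ne_zero).2 (by simpa using hz i)
  have norm_fst : ‖z.1‖ ≤ √(z.2 ^ 2 + ∑ i, |z.1 i| ^ 2) := by
    refine (pi_norm_le_iff_of_nonneg (Real.sqrt_nonneg _)).2 fun i ↦ Real.le_sqrt_of_sq_le ?_
    calc ‖z.1 i‖ ^ 2 ≤ ∑ i, |z.1 i| ^ 2 :=
          Finset.single_le_sum (f := fun i ↦ |z.1 i| ^ 2) (fun _ _ ↦ sq_nonneg _)
            (Finset.mem_univ i)
      _ ≤ z.2 ^ 2 + ∑ i, |z.1 i| ^ 2 := le_add_of_nonneg_left (sq_nonneg _)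
  have norm_snd : ‖z.2‖ ≤ √(z.2 ^ 2 + ∑ i, |z.1 i| ^ 2) := by
    refine Real.le_sqrt_of_sq_le ?_
    rw [Real.norm_eq_abs, sq_abs]
    exact le_add_of_nonneg_right (Finset.sum_nonneg fun _ _ ↦ sq_nonneg _)
  simp only [pnorm, norm_coe]
  exact max_le norm_fst norm_snd

theorem rieszKernel_coe_le (hαd : α ≤ d) {z : (Fin (d - 1) → ℝ) × ℝ}
    (hz : ∀ i, |z.1 i| ≤ 1 / 2) (hz₀ : z ≠ 0) :
    rieszKernel d α (fun i ↦ (z.1 i : AddCircle (1 : ℝ)), z.2) ≤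
      ENNReal.ofReal (‖z‖ ^ (-((d : ℝ) - α))) := by
  have norm_pos : 0 < ‖z‖ := norm_pos_iff.2 hz₀
  have norm_le := norm_le_pnorm_coe hz
  rw [rieszKernel, ENNReal.ofReal_rpow_of_pos (norm_pos.trans_le norm_le)]
  exact ENNReal.ofReal_le_ofReal (Real.rpow_le_rpow_of_nonpos norm_pos norm_le (by linarith))

theorem setLIntegral_rieszKernel_lt_top_of_lt (hα : 0 < α) (hαd : α < d) (a b : ℝ) :
    ∫⁻ ξ in slab2 d a b, rieszKernel d α ξ < ∞ := by
  have : (volume : Measure ((Fin (d - 1) → ℝ) × ℝ)).IsAddHaarMeasure := by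
    rw [Measure.volume_eq_prod]
    infer_instance
  have finrank_eq : Module.finrank ℝ ((Fin (d - 1) → ℝ) × ℝ) = d := by
    have d_pos : (0 : ℝ) < d := hα.trans hαd
    rw [Module.finrank_prod, Module.finrank_fin_fun, Module.finrank_self]
    exact Nat.sub_add_cancel (Nat.cast_pos.1 d_pos)
  have integrable : IntegrableOn (fun z : (Fin (d - 1) → ℝ) × ℝ ↦ ‖z‖ ^ (-((d : ℝ) - α)))
      (univ.pi (fun _ ↦ Ioc (-(1 / 2)) (1 / 2)) ×ˢ Ioo a b) :=
    integrableOn_norm_rpow_neg (by rw [finrank_eq]; linarith)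
      ((Bornology.IsBounded.pi fun _ ↦ Metric.isBounded_Ioc _ _).prod (Metric.isBounded_Ioo a b))
  rw [setLIntegral_slab2 continuous_rieszKernel.measurable]
  refine (setLIntegral_mono_ae' ?_ ?_).trans_lt integrable.lintegral_lt_top
  · exact (MeasurableSet.univ_pi fun _ ↦ measurableSet_Ioc).prod measurableSet_Ioo
  filter_upwards [Measure.ae_ne volume 0] with z hz₀ hz
  exact rieszKernel_coe_le hαd.le (fun i ↦ abs_le.2 (Ioc_subset_Icc_self (hz.1 i trivial))) hz₀

theorem setLIntegral_rieszKernel_lt_top_of_le (hαd : d ≤ α) (a b : ℝ) :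
    ∫⁻ ξ in slab2 d a b, rieszKernel d α ξ < ∞ := by
  have slab_subset : slab2 d a b ⊆ univ ×ˢ Icc a b := by
    rw [slab2_eq_univ_prod_Ioo]
    exact prod_mono_right Ioo_subset_Icc_self
  rcases (slab2 d a b).eq_empty_or_nonempty with empty | nonempty
  · simp [empty]
  obtain ⟨ξ₀, -, isMax⟩ := (isCompact_univ.prod isCompact_Icc).exists_isMaxOn
    (nonempty.mono slab_subset) continuous_rieszKernel.continuousOn
  have max_ne_top : rieszKernel d α ξ₀ ≠ ∞ :=
    ENNReal.rpow_ne_top_of_nonneg (by linarith) ENNReal.ofReal_ne_top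
  lift rieszKernel d α ξ₀ to NNReal using max_ne_top with C hC
  exact setLIntegral_lt_top_of_le_nnreal volume_slab2_lt_top.ne
    ⟨C, fun ξ hξ ↦ (isMax (slab_subset hξ)).trans_eq hC.symm⟩

end Kernel

section RieszMeasure

/-- The measure `‖x - y‖_♯^{-(d-α)} dx dy` on pairs of points, whose value on `E × F` is the
interaction `𝒥^α(E, F)`. -/
def rieszMeasure (d : ℕ) (α : ℝ) : Measure (Cyl d × Cyl d) :=
  (volume.prod volume).withDensity fun z ↦ rieszKernel d α (z.1 - z.2)

variable {d : ℕ} {α : ℝ}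

theorem Jalpha_eq_rieszMeasure (d : ℕ) (α : ℝ) (E F : Set (Cyl d)) :
    Jalpha d α E F = rieszMeasure d α (E ×ˢ F) := by
  have hK : Measurable fun z : Cyl d × Cyl d ↦ rieszKernel d α (z.1 - z.2) :=
    continuous_rieszKernel.measurable.comp measurable_sub
  rw [rieszMeasure, withDensity_apply', setLIntegral_prod _ hK.aemeasurable]
  rfl

theorem rieszMeasure_absolutelyContinuous : rieszMeasure d α ≪ volume.prod volume :=
  withDensity_absolutelyContinuous _ _

theorem nullMeasurableSet_prod_rieszMeasure {E F : Set (Cyl d)} (hE : NullMeasurableSet E)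
    (hF : NullMeasurableSet F) : NullMeasurableSet (E ×ˢ F) (rieszMeasure d α) :=
  (hE.prod hF).mono_ac rieszMeasure_absolutelyContinuous

theorem rieszMeasure_slab2_lt_top (hα : 0 < α) (a b : ℝ) :
    rieszMeasure d α (slab2 d a b ×ˢ slab2 d a b) < ∞ := by
  have kernel_lt_top : ∫⁻ ξ in slab2 d (-(b - a)) (b - a), rieszKernel d α ξ < ∞ :=
    (lt_or_ge α d).elim (setLIntegral_rieszKernel_lt_top_of_lt hα · _ _)
      (setLIntegral_rieszKernel_lt_top_of_le · _ _)
  calc rieszMeasure d α (slab2 d a b ×ˢ slab2 d a b)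
      ≤ (∫⁻ ξ in slab2 d a b - slab2 d a b, rieszKernel d α ξ) * volume (slab2 d a b) := by
        rw [rieszMeasure, withDensity_apply']
        exact setLIntegral_prod_comp_sub_le continuous_rieszKernel.measurable _ measurableSet_slab2
    _ ≤ (∫⁻ ξ in slab2 d (-(b - a)) (b - a), rieszKernel d α ξ) * volume (slab2 d a b) := by
        gcongr
        exact slab2_sub_slab2_subset
    _ < ∞ := ENNReal.mul_lt_top kernel_lt_top volume_slab2_lt_top

theorem PalphaSlab_eq_rieszMeasure (hα : 0 < α) (a b : ℝ) {E : Set (Cyl d)}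
    (hE : NullMeasurableSet E) :
    PalphaSlab d α a b E = rieszMeasure d α (slab2 d a b ×ˢ slab2 d a b \ E ×ˢ E) := by
  have hES : NullMeasurableSet (E ∩ slab2 d a b) := hE.inter measurableSet_slab2.nullMeasurableSet
  simp only [PalphaSlab, Jalpha_eq_rieszMeasure]
  exact measure_prod_self_sub_inter (nullMeasurableSet_prod_rieszMeasure hES hES)
    (rieszMeasure_slab2_lt_top hα a b).ne

end RieszMeasure

section HalfspaceHull

/-- The points lying no higher than some point of `E`: the smallest halfspace containing `E`, open
or closed according to whether the supremum `ρ_E` of the heights is attained, empty for empty `E`,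
and everything when `ρ_E = +∞`. -/
def halfspaceHull (d : ℕ) (E : Set (Cyl d)) : Set (Cyl d) := {x | ∃ y ∈ E, x.2 ≤ y.2}

variable {d : ℕ} {E F : Set (Cyl d)}

theorem halfspaceHull_eq_preimage_lowerClosure :
    halfspaceHull d E = Prod.snd ⁻¹' (lowerClosure (Prod.snd '' E) : Set ℝ) := by
  ext x
  simp only [mem_preimage, SetLike.mem_coe, mem_lowerClosure, exists_mem_image]
  rfl

theorem measurableSet_halfspaceHull : MeasurableSet (halfspaceHull d E) := by
  rw [halfspaceHull_eq_preimage_lowerClosure]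
  exact measurable_snd (lowerClosure _).lower.ordConnected.measurableSet

theorem halfspaceHull_mono (h : E ⊆ F) : halfspaceHull d E ⊆ halfspaceHull d F :=
  fun _ ⟨y, hy, hxy⟩ ↦ ⟨y, h hy, hxy⟩

theorem halfspaceHull_empty (d : ℕ) : halfspaceHull d ∅ = ∅ := by
  simp [halfspaceHull]

theorem halfspaceHull_union :
    halfspaceHull d (E ∪ F) = halfspaceHull d E ∪ halfspaceHull d F := by
  simp only [halfspaceHull, mem_union, or_and_right, exists_or, ofPred_or]

theorem halfspaceHull_total (E F : Set (Cyl d)) :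
    halfspaceHull d E ⊆ halfspaceHull d F ∨ halfspaceHull d F ⊆ halfspaceHull d E := by
  simp only [halfspaceHull_eq_preimage_lowerClosure]
  exact ((lowerClosure _).lower.total (lowerClosure _).lower).imp (preimage_mono ·)
    (preimage_mono ·)

theorem halfspaceHull_union_subset_or (E F : Set (Cyl d)) :
    halfspaceHull d (E ∪ F) ⊆ halfspaceHull d E ∨ halfspaceHull d (E ∪ F) ⊆ halfspaceHull d F := by
  rw [halfspaceHull_union]
  exact (halfspaceHull_total F E).imp (union_subset subset_rfl) (union_subset · subset_rfl)

theorem halfspaceHull_eq_univ (hE : ¬ BddTop d E) : halfspaceHull d E = univ := by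
  refine eq_univ_of_forall fun x ↦ ?_
  by_contra! hx
  exact hE ⟨x.2, fun y hy ↦ not_le.1 fun hxy ↦ hx ⟨y, hy, hxy⟩⟩

theorem halfspace_rhoSup_subset_halfspaceHull (hne : E.Nonempty) :
    halfspace d (rhoSup d E) ⊆ halfspaceHull d E := by
  obtain ⟨y, hy⟩ := hne
  intro x hx
  have : ¬ E ⊆ {z | z.2 < x.2} := notMem_of_lt_csInf hx ⟨y.2, fun _ hr ↦ (hr hy).le⟩
  obtain ⟨z, hz, hxz⟩ := not_subset.1 this
  exact ⟨z, hz, not_lt.1 hxz⟩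

theorem snd_le_rhoSup_of_mem_halfspaceHull (hE : BddTop d E) {x : Cyl d}
    (hx : x ∈ halfspaceHull d E) : x.2 ≤ rhoSup d E := by
  obtain ⟨y, hy, hxy⟩ := hx
  exact le_csInf hE fun _ hr ↦ hxy.trans (hr hy).le

theorem ae_snd_ne (d : ℕ) (c : ℝ) : ∀ᵐ x : Cyl d, x.2 ≠ c :=
  Measure.quasiMeasurePreserving_snd.ae (Measure.ae_ne volume c)

theorem halfspace_rhoSup_ae_eq_halfspaceHull (hne : E.Nonempty) (hE : BddTop d E) :
    halfspace d (rhoSup d E) =ᵐ[volume] halfspaceHull d E := by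
  filter_upwards [ae_snd_ne d (rhoSup d E)] with x hx
  exact propext ⟨fun h ↦ halfspace_rhoSup_subset_halfspaceHull hne h,
    fun h ↦ (snd_le_rhoSup_of_mem_halfspaceHull hE h).lt_of_ne hx⟩

end HalfspaceHull

section Perimeter

variable {d : ℕ} {α : ℝ} {E : Set (Cyl d)}

theorem tendsto_PalphaSlab_neg_left (hα : 0 < α) (hE : NullMeasurableSet E) (b : ℝ) :
    Tendsto (fun R : ℝ ↦ PalphaSlab d α (-R) b E) atTop
      (𝓝 (rieszMeasure d α (halfspace d b ×ˢ halfspace d b \ E ×ˢ E))) := by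
  simp only [PalphaSlab_eq_rieszMeasure hα _ _ hE, ← iUnion_slab2_neg_left]
  exact tendsto_measure_prod_self_sdiff _
    (fun _ _ hR ↦ slab2_subset_slab2 (neg_le_neg hR) le_rfl) _

theorem tendsto_PalphaSlab_neg_self (hα : 0 < α) (hE : NullMeasurableSet E) :
    Tendsto (fun R : ℝ ↦ PalphaSlab d α (-R) R E) atTop
      (𝓝 (rieszMeasure d α (univ ×ˢ univ \ E ×ˢ E))) := by
  simp only [PalphaSlab_eq_rieszMeasure hα _ _ hE, ← iUnion_slab2_neg_self]
  exact tendsto_measure_prod_self_sdiff _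
    (fun _ _ hR ↦ slab2_subset_slab2 (neg_le_neg hR) hR) _

theorem Palpha_eq_rieszMeasure (hα : 0 < α) (hE : NullMeasurableSet E) :
    Palpha d α E =
      rieszMeasure d α (halfspaceHull d E ×ˢ halfspaceHull d E \ E ×ˢ E) := by
  unfold Palpha
  split_ifs with empty bdd
  · simp [empty, halfspaceHull_empty]
  · have hull := halfspace_rhoSup_ae_eq_halfspaceHull (nonempty_iff_ne_empty.2 empty) bdd
    rw [(tendsto_PalphaSlab_neg_left hα hE _).limsup_eq]
    exact measure_congr (rieszMeasure_absolutelyContinuous.ae_eq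
      ((Measure.set_prod_ae_eq hull hull).diff (ae_eq_refl _)))
  · rw [(tendsto_PalphaSlab_neg_self hα hE).limsup_eq, halfspaceHull_eq_univ bdd]

theorem nullMeasurableSet_halfspaceHull_prod_sdiff (hE : NullMeasurableSet E) :
    NullMeasurableSet (halfspaceHull d E ×ˢ halfspaceHull d E \ E ×ˢ E) (rieszMeasure d α) :=
  have hull := (measurableSet_halfspaceHull (E := E)).nullMeasurableSet
  (nullMeasurableSet_prod_rieszMeasure hull hull).diff (nullMeasurableSet_prod_rieszMeasure hE hE)

end Perimeter

theorem Palpha_submodular_general {d : ℕ} {α : ℝ} (hα : 0 < α) {E F : Set (Cyl d)}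
    (hE : NullMeasurableSet E) (hF : NullMeasurableSet F) :
    Palpha d α (E ∪ F) + Palpha d α (E ∩ F) ≤ Palpha d α E + Palpha d α F := by
  rw [Palpha_eq_rieszMeasure hα (hE.union hF), Palpha_eq_rieszMeasure hα (hE.inter hF),
    Palpha_eq_rieszMeasure hα hE, Palpha_eq_rieszMeasure hα hF]
  exact measure_prod_self_sdiff_submodular
    (nullMeasurableSet_halfspaceHull_prod_sdiff (hE.inter hF))
    (nullMeasurableSet_halfspaceHull_prod_sdiff hF) (halfspaceHull_union_subset_or E F)
    (halfspaceHull_mono inter_subset_left) (halfspaceHull_mono inter_subset_right)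

/-- Submodularity of the `α`-Riesz perimeter. -/
theorem Palpha_submodular (d : ℕ) (hd : 2 ≤ d) (α : ℝ) (hα : 0 < α)
    (hα' : α < (d : ℝ) - 1) (E F : Set (Cyl d))
    (hE : MeasurableSet E) (hF : MeasurableSet F) :
    Palpha d α (E ∪ F) + Palpha d α (E ∩ F) ≤ Palpha d α E + Palpha d α F :=
  Palpha_submodular_general hα hE.nullMeasurableSet hF.nullMeasurableSet
end
end

section
/- Let K : 𝕋^{d−1} × ℝ → [0,+∞) be measurable with constants p > 2, s ∈ (0,1), γ > 0 such that K(ξ) ≤ γ |ξ_d|^{−p} for |ξ_d| ≥ 1 and K(ξ) ≤ γ ‖ξ‖_♯^{−(d+s)} for |ξ_d| < 1; assume moreover that K(x′,x_d) = K(−x′,x_d) = K(x′,−x_d) for all (x′,x_d), and that there exists γ₀ > 0 with K(ξ) ≥ γ₀ whenever |ξ_d| ≤ 1. Then 𝒫_K satisfies assumption (H): for every L > 0 and δ > 0 there exist ε₀ ∈ (0,1) and C(δ,L) > 0 such that for every E ∈ 𝔠_L with osc_{𝕋^{d−1}} f_E ≥ δ one has 𝒫_K(E) − 𝒫_K(E_ε)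 ≥ C(δ,L) ε for all 0 < ε ≤ ε₀. -/
open MeasureTheory Filter Set
open scoped ENNReal

noncomputable section

/-- The nonlocal perimeter governed by a kernel `K`:
`𝒫_K(E) = ∫_E ∫_{Eᶜ} K(x - y) dy dx`. -/
def PK (d : ℕ) (K : Cyl d → ℝ) (E : Set (Cyl d)) : ℝ≥0∞ :=
  ∫⁻ x in E, ∫⁻ y in Eᶜ, ENNReal.ofReal (K (x - y)) ∂volume ∂volume

/-- Oscillation of a function on the torus. -/
def osc (d : ℕ) (g : Torus d → ℝ) : ℝ := (⨆ x, g x) - (⨅ x, g x)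

/-!
Let `h = g x - g y` be the height difference over two base points and `t` the vertical component
of the displacement between two points above them. Integrating out the common height shows that
the perimeter of the region below `g` is the integral over `(x, y, t)` of the kernel against the
positive part `(h - t)⁺`. Averaging over the symmetries `(x, y, t) ↦ (y, x, -t)` and `t ↦ -t` of
the kernel replaces `(h - t)⁺` by `|h - t| / 2` and then by `max |h| |t| / 2`. The weight
`max |h| |t|` is monotone in `|h|`, so replacing `g` by `(1 - ε) g` decreases the integrand
everywhere. It decreases it by at least `ε |h|` where `|t| ≤ |h| / 2` and `ε ≤ 1 / 2`; by the
Lipschitz bound, `h ≥ δ / 2` for `x` and `y` in balls of a fixed radius around a maximum and a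
minimum point of `g`, and there the lower bound on the kernel gives a gain linear in `ε`.
-/

section MeasureLemmas

variable {α β γ δ : Type*} [MeasurableSpace α] [MeasurableSpace β] [MeasurableSpace γ]
  [MeasurableSpace δ]

lemma measurePreserving_prodProdProdComm (μ : Measure α) (ν : Measure β) (ρ : Measure γ)
    (τ : Measure δ) [SFinite μ] [SFinite ν] [SFinite ρ] [SFinite τ] :
    MeasurePreserving (fun z : (α × β) × (γ × δ) ↦ ((z.1.1, z.2.1), (z.1.2, z.2.2)))
      ((μ.prod ν).prod (ρ.prod τ)) ((μ.prod ρ).prod (ν.prod τ)) := by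
  have middle : MeasurePreserving (fun z : β × γ × δ ↦ (z.2.1, z.1, z.2.2))
      (ν.prod (ρ.prod τ)) (ρ.prod (ν.prod τ)) :=
    (measurePreserving_prodAssoc ρ ν τ).comp <|
      (Measure.measurePreserving_swap.prod (.id τ)).comp
        (measurePreserving_prodAssoc ν ρ τ).symm
  exact (measurePreserving_prodAssoc μ ρ (ν.prod τ)).symm.comp <|
    ((MeasurePreserving.id μ).prod middle).comp (measurePreserving_prodAssoc μ ν (ρ.prod τ))

lemma measurePreserving_prodProdProd_sub {G : Type*} [AddGroup G] [MeasurableSpace G]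
    [MeasurableAdd₂ G] [MeasurableNeg G] (μ : Measure α) (ρ : Measure β) (ν : Measure G)
    [SFinite μ] [SFinite ρ] [SFinite ν] [ν.IsAddRightInvariant] :
    MeasurePreserving
      (fun w : (α × G) × (β × G) ↦ (((w.1.1, w.2.1), w.1.2 - w.2.2), w.2.2))
      ((μ.prod ν).prod (ρ.prod ν)) (((μ.prod ρ).prod ν).prod ν) :=
  (measurePreserving_prodAssoc (μ.prod ρ) ν ν).symm.comp <|
    ((MeasurePreserving.id _).prod (measurePreserving_sub_prod ν ν)).comp
      (measurePreserving_prodProdProdComm μ ν ρ ν)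

lemma two_mul_lintegral_eq_lintegral_add_comp {μ : Measure α} {σ : α → α}
    (hσ : MeasurePreserving σ μ μ) {f : α → ℝ≥0∞} (hf : Measurable f) :
    2 * ∫⁻ x, f x ∂μ = ∫⁻ x, f x + f (σ x) ∂μ := by
  rw [lintegral_add_left hf, hσ.lintegral_comp hf, two_mul]

lemma exists_pos_forall_ofReal_le_measure_ball [PseudoMetricSpace α] [CompactSpace α]
    (μ : Measure α) [μ.IsOpenPosMeasure] {r : ℝ} (hr : 0 < r) :
    ∃ c : ℝ, 0 < c ∧ ∀ x, ENNReal.ofReal c ≤ μ (Metric.ball x r) := by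
  obtain ⟨t, -, ht, hcover⟩ :=
    (isCompact_univ (X := α)).finite_cover_balls (half_pos hr)
  lift t to Finset α using ht
  have hpos : 0 < t.inf fun y ↦ μ (Metric.ball y (r / 2)) :=
    (Finset.lt_inf_iff ENNReal.zero_lt_top).2 fun y _ ↦
      Metric.measure_ball_pos μ y (half_pos hr)
  obtain ⟨c, hc, hcle⟩ := ENNReal.lt_iff_exists_nnreal_btwn.1 hpos
  refine ⟨c, mod_cast hc, fun x ↦ ?_⟩
  obtain ⟨y, hy, hxy⟩ := mem_iUnion₂.1 (hcover (mem_univ x))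
  calc ENNReal.ofReal c = c := ENNReal.ofReal_coe_nnreal
    _ ≤ μ (Metric.ball y (r / 2)) := hcle.le.trans (Finset.inf_le hy)
    _ ≤ μ (Metric.ball x r) := measure_mono <| Metric.ball_subset <| by
        linarith [Metric.mem_ball'.1 hxy]

end MeasureLemmas

section Elementary

lemma abs_sub_add_abs_add {R : Type*} [CommRing R] [LinearOrder R] [IsStrictOrderedRing R]
    (a b : R) : |a - b| + |a + b| = 2 * max |a| |b| := by
  grind

lemma ofReal_add_ofReal_neg (a : ℝ) :
    ENNReal.ofReal a + ENNReal.ofReal (-a) = ENNReal.ofReal |a| := by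
  rcases le_total 0 a with ha | ha
  · rw [abs_of_nonneg ha, ENNReal.ofReal_of_nonpos (neg_nonpos.2 ha), add_zero]
  · rw [abs_of_nonpos ha, ENNReal.ofReal_of_nonpos ha, zero_add]

lemma max_abs_mul_le_max_abs {R : Type*} [CommRing R] [LinearOrder R] [IsStrictOrderedRing R]
    {θ : R} (hθ : |θ| ≤ 1) (a b : R) : max |θ * a| |b| ≤ max |a| |b| := by
  rw [abs_mul]
  exact max_le_max_right _ (mul_le_of_le_one_left (abs_nonneg a) hθ)

lemma max_abs_one_sub_mul_add_le {R : Type*} [Field R] [LinearOrder R] [IsStrictOrderedRing R]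
    {ε δ a b : R} (hε : 0 ≤ ε) (hε' : ε ≤ 1 / 2) (ha : δ ≤ a) (hb : |b| ≤ δ / 2) :
    max |(1 - ε) * a| |b| + δ * ε ≤ max |a| |b| := by
  have hδ : 0 ≤ δ := by linarith [abs_nonneg b]
  have hb' : |b| ≤ (1 - ε) * a := by nlinarith
  rw [abs_of_nonneg (hδ.trans ha), abs_of_nonneg ((abs_nonneg b).trans hb'), max_eq_left hb']
  exact le_max_of_le_left (by nlinarith)

lemma exists_le_sub_of_le_iSup_sub_iInf {X : Type*} [TopologicalSpace X] [CompactSpace X]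
    [Nonempty X] {g : X → ℝ} (hg : Continuous g) {δ : ℝ} (h : δ ≤ (⨆ x, g x) - ⨅ x, g x) :
    ∃ x y, δ ≤ g x - g y := by
  obtain ⟨x, hx⟩ := (isCompact_range hg).sSup_mem (range_nonempty g)
  obtain ⟨y, hy⟩ := (isCompact_range hg).sInf_mem (range_nonempty g)
  exact ⟨x, y, by rwa [hx, hy]⟩

end Elementary

section Perimeter

variable {X : Type*}

/-- The region on and below the graph of `g` in `X × ℝ`; over the torus this is `subgraph`. -/
def hypograph (g : X → ℝ) : Set (X × ℝ) := {p | p.2 ≤ g p.1}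

variable [MeasurableSpace X]

lemma measurableSet_hypograph {g : X → ℝ} (hg : Measurable g) : MeasurableSet (hypograph g) :=
  measurableSet_le measurable_snd (hg.comp measurable_fst)

/-- The nonlocal perimeter in `X × ℝ` of a kernel invariant under vertical translations:
points `(x, a)` and `(y, b)` interact with strength `k ((x, y), a - b)`. On the torus, the
perimeter `PK` of a kernel `K` is by definition the case `k ((x, y), t) = K (x - y, t)`. -/
def verticalPerimeter (μ : Measure X) (k : (X × X) × ℝ → ℝ≥0∞) (E : Set (X × ℝ)) : ℝ≥0∞ :=
  ∫⁻ p in E, ∫⁻ q in Eᶜ, k ((p.1, q.1), p.2 - q.2) ∂μ.prod volume ∂μ.prod volume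

variable {μ : Measure X} [SFinite μ] {k : (X × X) × ℝ → ℝ≥0∞} {g : X → ℝ}

/-- For fixed `x`, `y` and vertical gap `t`, the pairs `(x, b + t)`, `(y, b)` separated by the
hypograph are those with `g y < b ≤ g x - t`. -/
lemma verticalPerimeter_hypograph (hk : Measurable k) (hg : Measurable g) :
    verticalPerimeter μ k (hypograph g) =
      ∫⁻ z, k z * ENNReal.ofReal (g z.1.1 - g z.1.2 - z.2) ∂(μ.prod μ).prod volume := by
  set S : Set (((X × X) × ℝ) × ℝ) := {w | g w.1.1.2 < w.2} ∩ {w | w.2 ≤ g w.1.1.1 - w.1.2}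
  have hS : MeasurableSet S :=
    (measurableSet_lt (by fun_prop) (by fun_prop)).inter
      (measurableSet_le (by fun_prop) (by fun_prop))
  have hF : Measurable (S.indicator fun w ↦ k w.1) := (hk.comp measurable_fst).indicator hS
  have hE := measurableSet_hypograph hg
  calc verticalPerimeter μ k (hypograph g)
      = ∫⁻ w in hypograph g ×ˢ (hypograph g)ᶜ, k ((w.1.1, w.2.1), w.1.2 - w.2.2)
          ∂(μ.prod volume).prod (μ.prod volume) :=
        (setLIntegral_prod (fun w : (X × ℝ) × (X × ℝ) ↦ k ((w.1.1, w.2.1), w.1.2 - w.2.2))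
          (by fun_prop)).symm
    _ = ∫⁻ w, S.indicator (fun w ↦ k w.1) (((w.1.1, w.2.1), w.1.2 - w.2.2), w.2.2)
          ∂(μ.prod volume).prod (μ.prod volume) := by
        rw [← lintegral_indicator (hE.prod hE.compl)]
        congr with w
        simp only [indicator, S, hypograph, mem_prod, mem_inter_iff, mem_compl_iff,
          mem_ofPred_eq, not_le, sub_sub_eq_add_sub]
        congr 1
        grind
    _ = ∫⁻ w, S.indicator (fun w ↦ k w.1) w ∂((μ.prod μ).prod volume).prod volume :=
        (measurePreserving_prodProdProd_sub μ μ volume).lintegral_comp hF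
    _ = ∫⁻ z, ∫⁻ b, (Ioc (g z.1.2) (g z.1.1 - z.2)).indicator (fun _ ↦ k z) b ∂volume
          ∂(μ.prod μ).prod volume := lintegral_prod _ hF.aemeasurable
    _ = ∫⁻ z, k z * ENNReal.ofReal (g z.1.1 - g z.1.2 - z.2) ∂(μ.prod μ).prod volume := by
        congr with z
        rw [lintegral_indicator_const measurableSet_Ioc, Real.volume_Ioc, sub_right_comm]

lemma two_mul_verticalPerimeter_hypograph_eq_lintegral_abs_sub (hk : Measurable k)
    (hswap : ∀ x y t, k ((y, x), -t) = k ((x, y), t)) (hg : Measurable g) :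
    2 * verticalPerimeter μ k (hypograph g) =
      ∫⁻ z, k z * ENNReal.ofReal |g z.1.1 - g z.1.2 - z.2| ∂(μ.prod μ).prod volume := by
  have hσ : MeasurePreserving (Prod.map Prod.swap Neg.neg : (X × X) × ℝ → (X × X) × ℝ)
      ((μ.prod μ).prod volume) ((μ.prod μ).prod volume) :=
    Measure.measurePreserving_swap.prod (Measure.measurePreserving_neg volume)
  rw [verticalPerimeter_hypograph hk hg,
    two_mul_lintegral_eq_lintegral_add_comp hσ (by fun_prop)]
  congr with ⟨⟨x, y⟩, t⟩
  simp only [Prod.map_apply, Prod.swap_prod_mk, hswap, ← mul_add, ← ofReal_add_ofReal_neg]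
  ring_nf

lemma two_mul_verticalPerimeter_hypograph_eq_lintegral_max (hk : Measurable k)
    (hswap : ∀ x y t, k ((y, x), t) = k ((x, y), t))
    (heven : ∀ x y t, k ((x, y), -t) = k ((x, y), t)) (hg : Measurable g) :
    2 * verticalPerimeter μ k (hypograph g) =
      ∫⁻ z, k z * ENNReal.ofReal (max |g z.1.1 - g z.1.2| |z.2|) ∂(μ.prod μ).prod volume := by
  have hσ : MeasurePreserving (Prod.map id Neg.neg : (X × X) × ℝ → (X × X) × ℝ)
      ((μ.prod μ).prod volume) ((μ.prod μ).prod volume) :=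
    (MeasurePreserving.id _).prod (Measure.measurePreserving_neg volume)
  rw [two_mul_verticalPerimeter_hypograph_eq_lintegral_abs_sub hk
    (fun x y t ↦ (heven y x t).trans (hswap x y t)) hg]
  refine (ENNReal.mul_right_inj two_ne_zero ENNReal.ofNat_ne_top).1 ?_
  rw [two_mul_lintegral_eq_lintegral_add_comp hσ (by fun_prop),
    ← lintegral_const_mul _ (by fun_prop)]
  congr with ⟨⟨x, y⟩, t⟩
  simp only [Prod.map_apply, id_eq, heven, ← mul_add, sub_neg_eq_add]
  rw [← ENNReal.ofReal_add (abs_nonneg _) (abs_nonneg _), abs_sub_add_abs_add,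
    ENNReal.ofReal_mul zero_le_two, ENNReal.ofReal_ofNat, mul_left_comm]

lemma verticalPerimeter_hypograph_one_sub_mul_add_le (hk : Measurable k)
    (hswap : ∀ x y t, k ((y, x), t) = k ((x, y), t))
    (heven : ∀ x y t, k ((x, y), -t) = k ((x, y), t)) {γ₀ : ℝ≥0∞}
    (hlow : ∀ z, |z.2| ≤ 1 → γ₀ ≤ k z) (hg : Measurable g) {A B : Set X}
    (hA : MeasurableSet A) (hB : MeasurableSet B) {δ : ℝ} (hδ : 0 ≤ δ)
    (hAB : ∀ x ∈ A, ∀ y ∈ B, δ ≤ g x - g y) {ε : ℝ} (hε : 0 ≤ ε) (hε' : ε ≤ 1 / 2) :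
    verticalPerimeter μ k (hypograph fun x ↦ (1 - ε) * g x) +
        γ₀ * ENNReal.ofReal (δ * ε) * (μ A * μ B * ENNReal.ofReal (min 1 (δ / 2))) ≤
      verticalPerimeter μ k (hypograph g) := by
  have hθ : |1 - ε| ≤ 1 := abs_le.2 ⟨by linarith, by linarith⟩
  set τ := min 1 (δ / 2)
  set S : Set ((X × X) × ℝ) := (A ×ˢ B) ×ˢ Icc (-τ) τ
  have hS : MeasurableSet S := (hA.prod hB).prod measurableSet_Icc
  have hSvol : ((μ.prod μ).prod volume) S = 2 * (μ A * μ B * ENNReal.ofReal τ) := by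
    rw [Measure.prod_prod, Measure.prod_prod, Real.volume_Icc, sub_neg_eq_add, ← two_mul,
      ENNReal.ofReal_mul zero_le_two, ENNReal.ofReal_ofNat, mul_left_comm]
  refine (ENNReal.mul_le_mul_iff_right two_ne_zero ENNReal.ofNat_ne_top).1 ?_
  rw [mul_add, mul_left_comm, ← hSvol, ← lintegral_indicator_const hS,
    two_mul_verticalPerimeter_hypograph_eq_lintegral_max hk hswap heven hg,
    two_mul_verticalPerimeter_hypograph_eq_lintegral_max hk hswap heven (by fun_prop),
    ← lintegral_add_right _ (measurable_const.indicator hS)]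
  refine lintegral_mono fun ⟨⟨x, y⟩, t⟩ ↦ ?_
  simp only [← mul_sub]
  by_cases hz : ((x, y), t) ∈ S
  · obtain ⟨⟨hx, hy⟩, ht⟩ := id hz
    have ht : |t| ≤ τ := abs_le.2 ht
    calc _ ≤ k ((x, y), t) * ENNReal.ofReal (max |(1 - ε) * (g x - g y)| |t|) +
          k ((x, y), t) * ENNReal.ofReal (δ * ε) := by
          rw [indicator_of_mem hz]
          gcongr
          exact hlow _ (ht.trans (min_le_left _ _))
      _ = k ((x, y), t) * ENNReal.ofReal (max |(1 - ε) * (g x - g y)| |t| + δ * ε) := by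
          rw [← mul_add, ← ENNReal.ofReal_add (by positivity) (by positivity)]
      _ ≤ _ := by
          gcongr
          exact max_abs_one_sub_mul_add_le hε hε' (hAB x hx y hy) (ht.trans (min_le_right _ _))
  · rw [indicator_of_notMem hz, add_zero]
    exact mul_le_mul_right (ENNReal.ofReal_le_ofReal (max_abs_mul_le_max_abs hθ _ _)) _

end Perimeter

theorem PK_assumptionH_general {X : Type*} [PseudoMetricSpace X] [CompactSpace X] [Nonempty X]
    [MeasurableSpace X] [OpensMeasurableSpace X] (μ : Measure X) [SFinite μ] [μ.IsOpenPosMeasure]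
    {k : (X × X) × ℝ → ℝ≥0∞} (hk : Measurable k)
    (hswap : ∀ x y t, k ((y, x), t) = k ((x, y), t))
    (heven : ∀ x y t, k ((x, y), -t) = k ((x, y), t)) {γ₀ : ℝ} (hγ₀ : 0 < γ₀)
    (hlow : ∀ z, |z.2| ≤ 1 → ENNReal.ofReal γ₀ ≤ k z) (L : NNReal) {δ : ℝ} (hδ : 0 < δ) :
    ∃ C : ℝ, 0 < C ∧
      ∀ g : X → ℝ, LipschitzWith L g → δ ≤ (⨆ x, g x) - ⨅ x, g x →
        ∀ ε : ℝ, 0 < ε → ε ≤ 1 / 2 →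
          verticalPerimeter μ k (hypograph fun x ↦ (1 - ε) * g x) + ENNReal.ofReal (C * ε) ≤
            verticalPerimeter μ k (hypograph g) := by
  obtain ⟨r, hr, hLr⟩ : ∃ r, 0 < r ∧ L * r ≤ δ / 4 :=
    ⟨δ / (4 * (L + 1)), by positivity, by field_simp; linarith⟩
  obtain ⟨c, hc, hball⟩ := exists_pos_forall_ofReal_le_measure_ball μ hr
  refine ⟨γ₀ * (δ / 2) * (c * c * min 1 (δ / 2 / 2)), by positivity, fun g hg hosc ε hε hε' ↦ ?_⟩
  obtain ⟨x₀, y₀, hxy⟩ := exists_le_sub_of_le_iSup_sub_iInf hg.continuous hosc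
  have hlip : ∀ {x x₀}, x ∈ Metric.ball x₀ r → |g x - g x₀| ≤ δ / 4 := by
    intro x x₀ hx
    calc |g x - g x₀| ≤ L * dist x x₀ := hg.dist_le_mul x x₀
      _ ≤ L * r := by gcongr; exact (Metric.mem_ball.1 hx).le
      _ ≤ δ / 4 := hLr
  have hAB : ∀ x ∈ Metric.ball x₀ r, ∀ y ∈ Metric.ball y₀ r, δ / 2 ≤ g x - g y := by
    intro x hx y hy
    linarith [(abs_le.1 (hlip hx)).1, (abs_le.1 (hlip hy)).2]
  refine le_trans ?_ <| verticalPerimeter_hypograph_one_sub_mul_add_le hk hswap heven hlow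
    hg.continuous.measurable measurableSet_ball measurableSet_ball (half_pos hδ).le hAB hε.le hε'
  gcongr
  calc ENNReal.ofReal (γ₀ * (δ / 2) * (c * c * min 1 (δ / 2 / 2)) * ε)
      = ENNReal.ofReal γ₀ * ENNReal.ofReal (δ / 2 * ε) *
          (ENNReal.ofReal c * ENNReal.ofReal c * ENNReal.ofReal (min 1 (δ / 2 / 2))) := by
        rw [← ENNReal.ofReal_mul, ← ENNReal.ofReal_mul, ← ENNReal.ofReal_mul, ← ENNReal.ofReal_mul]
        · ring_nf
        all_goals positivity
    _ ≤ _ := by gcongr <;> exact hball _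

/-- Under the decay, symmetry and non-degeneracy assumptions on the kernel `K`, the
nonlocal perimeter `𝒫_K` satisfies assumption (H). -/
theorem PK_assumptionH (d : ℕ) (hd : 2 ≤ d) (K : Cyl d → ℝ)
    (hKmeas : Measurable K) (hKnn : ∀ ξ, 0 ≤ K ξ)
    (p s γ : ℝ) (hp : 2 < p) (hs : s ∈ Set.Ioo (0:ℝ) 1) (hγ : 0 < γ)
    (hK1 : ∀ ξ : Cyl d, 1 ≤ |ξ.2| → K ξ ≤ γ / |ξ.2| ^ p)
    (hK2 : ∀ ξ : Cyl d, |ξ.2| < 1 →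
      ENNReal.ofReal (K ξ) ≤
        ENNReal.ofReal γ / (ENNReal.ofReal (pnorm d ξ)) ^ ((d : ℝ) + s))
    (hsym1 : ∀ ξ : Cyl d, K (-ξ.1, ξ.2) = K ξ)
    (hsym2 : ∀ ξ : Cyl d, K (ξ.1, -ξ.2) = K ξ)
    (γ₀ : ℝ) (hγ₀ : 0 < γ₀) (hKlow : ∀ ξ : Cyl d, |ξ.2| ≤ 1 → γ₀ ≤ K ξ)
    (L δ : ℝ) (hL : 0 < L) (hδ : 0 < δ) :
    ∃ ε₀ ∈ Set.Ioo (0:ℝ) 1, ∃ C : ℝ, 0 < C ∧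
      ∀ g : Torus d → ℝ, LipschitzWith (Real.toNNReal L) g → δ ≤ osc d g →
        ∀ ε : ℝ, 0 < ε → ε ≤ ε₀ →
          PK d K (subgraph d (fun x => (1 - ε) * g x)) + ENNReal.ofReal (C * ε)
            ≤ PK d K (subgraph d g) := by
  exact ⟨1 / 2, by norm_num, PK_assumptionH_general volume
    (k := fun z ↦ ENNReal.ofReal (K (z.1.1 - z.1.2, z.2))) (by fun_prop)
    (fun x y t ↦ by simpa only [neg_sub] using congrArg ENNReal.ofReal (hsym1 (x - y, t)))
    (fun x y t ↦ congrArg ENNReal.ofReal (hsym2 (x - y, t))) hγ₀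
    (fun z hz ↦ ENNReal.ofReal_le_ofReal (hKlow _ hz)) L.toNNReal hδ⟩
end
end

section
/- Let d ≥ 2. The 0-fractional perimeter 𝒫^0 satisfies assumption (H): for every L > 0 and δ > 0 there exist ε₀ ∈ (0,1) and C(δ,L) > 0 such that for every E ∈ 𝔠_L with osc_{𝕋^{d−1}} f_E ≥ δ one has 𝒫^0(E) − 𝒫^0(E_ε) ≥ C(δ,L) ε for all 0 < ε ≤ ε₀. -/
open MeasureTheory Filter Set
open scoped ENNReal

noncomputable section

open Classical in
/-- Short-range part `𝒢^0(E,F)` of the 0-fractional perimeter. -/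
def G0 (d : ℕ) (E F : Set (Cyl d)) : ℝ≥0∞ :=
  ∫⁻ x in E, ∫⁻ y in F,
    (if pnorm d (x - y) < 1 then (ENNReal.ofReal (pnorm d (x - y))) ^ (-(d : ℝ)) else 0)
      ∂volume ∂volume

open Classical in
/-- Long-range interaction `𝒥^0(E,F)`. -/
def J0 (d : ℕ) (E F : Set (Cyl d)) : ℝ≥0∞ :=
  ∫⁻ x in E, ∫⁻ y in F,
    (if 1 < pnorm d (x - y) then (ENNReal.ofReal (pnorm d (x - y))) ^ (-(d : ℝ)) else 0)
      ∂volume ∂volume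

/-- `𝒬^0_{R₁,R₂}(E) = 𝒥^0(𝕊,𝕊) - 𝒥^0(E∩𝕊, E∩𝕊)`. -/
def Q0 (d : ℕ) (R₁ R₂ : ℝ) (E : Set (Cyl d)) : ℝ≥0∞ :=
  J0 d (slab2 d R₁ R₂) (slab2 d R₁ R₂) - J0 d (E ∩ slab2 d R₁ R₂) (E ∩ slab2 d R₁ R₂)

open Classical in
/-- The 0-fractional perimeter `𝒫^0`. -/
def P0 (d : ℕ) (E : Set (Cyl d)) : ℝ≥0∞ :=
  if E = ∅ then 0
  else G0 d E Eᶜ +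
    (if BddTop d E then limsup (fun R : ℝ => Q0 d (-R) (rhoSup d E) E) atTop
     else limsup (fun R : ℝ => Q0 d (-R) R E) atTop)

/-!
Writing `𝒢⁰(E, Eᶜ)` as an integral over shifts `ξ = (ξ', h)`, a subgraph contributes
`∫ (g (ξ' + x) - g x - h)⁺ dx` for each `ξ`. The kernel is even in `ξ'`, so this may be averaged
with the same expression at `(-ξ', h)`; the integrand becomes `(a - h)⁺ + (-a - h)⁺` with
`a = g (ξ' + x) - g x`, which is even and convex in `a` and therefore decreases when `g` is replaced
by `(1 - ε) g`. It drops by at least a multiple of `ε |a|` where `|h| ≤ |a| / 2`. Subdividing a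
path from a minimum to a maximum point of `g` yields a short shift with `a` bounded below, and
equicontinuity propagates this bound to balls of a fixed radius.

The long-range term does not increase: after a vertical translation aligning the maxima, the
subgraph of `(1 - ε) g` contains that of `g`, and `𝒬⁰` is decreasing in the set.
-/

open scoped Topology

lemma lintegral_add_const_mul_measure_le {α : Type*} [MeasurableSpace α] {μ : Measure α}
    {f f' : α → ℝ≥0∞} {c : ℝ≥0∞} {A : Set α} (hA : MeasurableSet A) (hle : ∀ x, f x ≤ f' x)
    (hgain : ∀ x ∈ A, f x + c ≤ f' x) :
    ∫⁻ x, f x ∂μ + c * μ A ≤ ∫⁻ x, f' x ∂μ := by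
  rw [← lintegral_indicator_const hA c]
  refine (le_lintegral_add _ _).trans (lintegral_mono fun x => ?_)
  by_cases hx : x ∈ A
  · simpa only [indicator_of_mem hx] using hgain x hx
  · simpa only [indicator_of_notMem hx, add_zero] using hle x

section Interaction

variable {G : Type*} [MeasurableSpace G] [AddGroup G] {μ : Measure G} {k : G → ℝ≥0∞}
  {E E' F F' : Set G}

/-- The interaction energy `∫_E ∫_F k (x - y) dy dx` of two sets through a translation-invariant
kernel, the common form of `G0` and `J0`. -/
def interaction (μ : Measure G) (k : G → ℝ≥0∞) (E F : Set G) : ℝ≥0∞ :=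
  ∫⁻ x in E, ∫⁻ y in F, k (x - y) ∂μ ∂μ

lemma interaction_mono (hE : E ⊆ E') (hF : F ⊆ F') :
    interaction μ k E F ≤ interaction μ k E' F' :=
  (lintegral_mono_set hE).trans (lintegral_mono fun _ => lintegral_mono_set hF)

lemma interaction_preimage_add_right [MeasurableAdd G] [μ.IsAddRightInvariant] (τ : G) :
    interaction μ k ((· + τ) ⁻¹' E) ((· + τ) ⁻¹' F) = interaction μ k E F := by
  have setLIntegral_shift (f : G → ℝ≥0∞) (s : Set G) :
      ∫⁻ x in (· + τ) ⁻¹' s, f (x + τ) ∂μ = ∫⁻ x in s, f x ∂μ :=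
    (measurePreserving_add_right μ τ).setLIntegral_comp_preimage_emb
      (measurableEmbedding_addRight τ) f s
  calc interaction μ k ((· + τ) ⁻¹' E) ((· + τ) ⁻¹' F)
      = ∫⁻ x in (· + τ) ⁻¹' E, ∫⁻ y in (· + τ) ⁻¹' F, k (x + τ - (y + τ)) ∂μ ∂μ := by
        simp only [interaction, add_sub_add_right_eq_sub]
    _ = ∫⁻ x in (· + τ) ⁻¹' E, ∫⁻ y in F, k (x + τ - y) ∂μ ∂μ := by
        exact lintegral_congr fun x => setLIntegral_shift (fun y => k (x + τ - y)) F
    _ = interaction μ k E F := setLIntegral_shift (fun x => ∫⁻ y in F, k (x - y) ∂μ) E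

lemma interaction_eq_lintegral_mul_measure [MeasurableAdd₂ G] [MeasurableSub₂ G] [SFinite μ]
    [μ.IsAddRightInvariant] (hk : Measurable k) (hE : MeasurableSet E) :
    interaction μ k E F = ∫⁻ ξ, k ξ * μ ((ξ + ·) ⁻¹' E ∩ F) ∂μ := by
  calc interaction μ k E F
      = ∫⁻ y in F, ∫⁻ x in E, k (x - y) ∂μ ∂μ :=
        lintegral_lintegral_swap (hk.comp measurable_sub).aemeasurable
    _ = ∫⁻ y in F, ∫⁻ ξ in (· + y) ⁻¹' E, k ξ ∂μ ∂μ := by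
        refine lintegral_congr fun y => ?_
        rw [← (measurePreserving_add_right μ y).setLIntegral_comp_preimage_emb
          (measurableEmbedding_addRight y) (fun x => k (x - y)) E]
        simp only [add_sub_cancel_right]
    _ = ∫⁻ y in F, ∫⁻ ξ, k ξ * E.indicator 1 (ξ + y) ∂μ ∂μ := by
        refine lintegral_congr fun y => ?_
        rw [← lintegral_indicator (measurable_add_const y hE)]
        exact lintegral_congr fun ξ => by by_cases hξ : ξ + y ∈ E <;> simp [hξ]
    _ = ∫⁻ ξ, ∫⁻ y in F, k ξ * E.indicator 1 (ξ + y) ∂μ ∂μ :=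
        lintegral_lintegral_swap ((hk.comp measurable_snd).mul ((measurable_one.indicator hE).comp
          (measurable_snd.add measurable_fst))).aemeasurable
    _ = ∫⁻ ξ, k ξ * μ ((ξ + ·) ⁻¹' E ∩ F) ∂μ := by
        refine lintegral_congr fun ξ => ?_
        have hξE : MeasurableSet ((ξ + ·) ⁻¹' E) := measurable_const_add ξ hE
        rw [← Measure.restrict_apply hξE, ← lintegral_indicator_one hξE]
        exact lintegral_const_mul _ (measurable_one.indicator hξE)

end Interaction

/-- The integrand `(a - h)⁺ + (-a - h)⁺` obtained by symmetrising the excess `(a - h)⁺` of a height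
difference `a` over a vertical shift `h`. -/
def evenExcess (a h : ℝ) : ℝ := max (a - h) 0 + max (-a - h) 0

lemma evenExcess_nonneg (a h : ℝ) : 0 ≤ evenExcess a h :=
  add_nonneg (le_max_right _ _) (le_max_right _ _)

lemma evenExcess_eq_max (a h : ℝ) : evenExcess a h = max (|a| - h) (max (-2 * h) 0) := by
  unfold evenExcess
  grind

lemma evenExcess_le_evenExcess {a a' : ℝ} (haa' : |a| ≤ |a'|) (h : ℝ) :
    evenExcess a h ≤ evenExcess a' h := by
  rw [evenExcess_eq_max, evenExcess_eq_max]
  gcongr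

lemma evenExcess_mul_le {c : ℝ} (hc : c ∈ Icc (0 : ℝ) 1) (a h : ℝ) :
    evenExcess (c * a) h ≤ evenExcess a h := by
  refine evenExcess_le_evenExcess ?_ h
  rw [abs_mul, abs_of_nonneg hc.1]
  exact mul_le_of_le_one_left (abs_nonneg a) hc.2

lemma evenExcess_mul_add_le {a b c h : ℝ} (hc : c ∈ Icc (0 : ℝ) 1) (hb : b ≤ |a|)
    (hh : |h| ≤ b / 2) :
    evenExcess (c * a) h + (1 - c) * (b / 2) ≤ evenExcess a h := by
  obtain ⟨hc0, hc1⟩ := hc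
  obtain ⟨hh_lower, hh_upper⟩ := abs_le.1 hh
  rw [evenExcess_eq_max, evenExcess_eq_max, abs_mul, abs_of_nonneg hc0]
  refine le_trans ?_ (le_max_left _ _)
  rw [← le_sub_iff_add_le, max_le_iff, max_le_iff]
  refine ⟨?_, ?_, ?_⟩ <;> nlinarith

section Subgraph

variable {d : ℕ} {g : Torus d → ℝ}

instance isNegInvariant_volume_torus : (volume : Measure (Torus d)).IsNegInvariant :=
  Pi.isNegInvariant_volume

instance isAddLeftInvariant_volume_cyl : (volume : Measure (Cyl d)).IsAddLeftInvariant :=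
  Measure.prod.instIsAddLeftInvariant (μ := volume) (ν := volume)

lemma measurableSet_subgraph (hg : Measurable g) : MeasurableSet (subgraph d g) :=
  measurableSet_le measurable_snd (hg.comp measurable_fst)

lemma volume_shift_subgraph_inter_compl (hg : Measurable g) (ξ : Cyl d) :
    volume ((ξ + ·) ⁻¹' subgraph d g ∩ (subgraph d g)ᶜ) =
      ∫⁻ x, ENNReal.ofReal (g (ξ.1 + x) - g x - ξ.2) := by
  have hE := measurableSet_subgraph hg
  rw [Measure.volume_eq_prod, Measure.prod_apply ((measurable_const_add ξ hE).inter hE.compl)]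
  refine lintegral_congr fun x => ?_
  have fiber_eq : Prod.mk x ⁻¹' ((ξ + ·) ⁻¹' subgraph d g ∩ (subgraph d g)ᶜ) =
      Ioc (g x) (g (ξ.1 + x) - ξ.2) := by
    ext s
    simp [subgraph, le_sub_iff_add_le', and_comm]
  rw [fiber_eq, Real.volume_Ioc]
  congr 1
  ring

/-- The symmetrised excess `∫ (a - h)⁺ + (-a - h)⁺ dx` of `g` under the shift `ξ = (ξ', h)`, where
`a = g (ξ' + x) - g x`. -/
def shiftExcess (g : Torus d → ℝ) (ξ : Cyl d) : ℝ≥0∞ :=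
  ∫⁻ x, ENNReal.ofReal (evenExcess (g (ξ.1 + x) - g x) ξ.2)

lemma volume_shift_add_volume_shift_neg_eq_shiftExcess (hg : Measurable g) (ξ : Cyl d) :
    volume ((ξ + ·) ⁻¹' subgraph d g ∩ (subgraph d g)ᶜ) +
        volume (((-ξ.1, ξ.2) + ·) ⁻¹' subgraph d g ∩ (subgraph d g)ᶜ) = shiftExcess g ξ := by
  have neg_shift : ∫⁻ x, ENNReal.ofReal (g (-ξ.1 + x) - g x - ξ.2) =
      ∫⁻ x, ENNReal.ofReal (-(g (ξ.1 + x) - g x) - ξ.2) := by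
    rw [← lintegral_add_left_eq_self _ ξ.1]
    simp only [neg_add_cancel_left, neg_sub]
  rw [volume_shift_subgraph_inter_compl hg, volume_shift_subgraph_inter_compl hg, neg_shift,
    ← lintegral_add_left (by fun_prop)]
  refine lintegral_congr fun x => ?_
  rw [evenExcess, ENNReal.ofReal_add (le_max_right _ _) (le_max_right _ _), ENNReal.ofReal_max,
    ENNReal.ofReal_max, ENNReal.ofReal_zero, max_eq_left zero_le, max_eq_left zero_le]

lemma two_mul_interaction_subgraph_compl {k : Cyl d → ℝ≥0∞} (hk : Measurable k)
    (hk_even : ∀ ξ : Cyl d, k (-ξ.1, ξ.2) = k ξ) (hg : Measurable g) :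
    2 * interaction volume k (subgraph d g) (subgraph d g)ᶜ = ∫⁻ ξ, k ξ * shiftExcess g ξ := by
  have hE := measurableSet_subgraph hg
  set V : Cyl d → ℝ≥0∞ := fun ξ => volume ((ξ + ·) ⁻¹' subgraph d g ∩ (subgraph d g)ᶜ) with hV
  have hkV : Measurable fun ξ => k ξ * V ξ := by
    simp only [hV, volume_shift_subgraph_inter_compl hg]
    fun_prop
  have reflection : MeasurePreserving (fun ξ : Cyl d => ((-ξ.1, ξ.2) : Cyl d)) :=
    (Measure.measurePreserving_neg (volume : Measure (Torus d))).prod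
      (MeasurePreserving.id (volume : Measure ℝ))
  have reflect : ∫⁻ ξ : Cyl d, k ξ * V (-ξ.1, ξ.2) = ∫⁻ ξ, k ξ * V ξ := by
    rw [← reflection.lintegral_comp hkV]
    simp only [hk_even]
  calc 2 * interaction volume k (subgraph d g) (subgraph d g)ᶜ
      = (∫⁻ ξ, k ξ * V ξ) + ∫⁻ ξ : Cyl d, k ξ * V (-ξ.1, ξ.2) := by
        rw [interaction_eq_lintegral_mul_measure hk hE, reflect, two_mul]
    _ = ∫⁻ ξ, k ξ * shiftExcess g ξ := by
        rw [← lintegral_add_left hkV]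
        simp only [← mul_add, hV, volume_shift_add_volume_shift_neg_eq_shiftExcess hg]

lemma shiftExcess_const_mul_le {c : ℝ} (hc : c ∈ Icc (0 : ℝ) 1) (g : Torus d → ℝ) (ξ : Cyl d) :
    shiftExcess (fun x => c * g x) ξ ≤ shiftExcess g ξ := by
  refine lintegral_mono fun x => ENNReal.ofReal_le_ofReal ?_
  rw [← mul_sub]
  exact evenExcess_mul_le hc _ _

lemma shiftExcess_const_mul_add_le {b c : ℝ} (hc : c ∈ Icc (0 : ℝ) 1) {ξ : Cyl d}
    (hξ : |ξ.2| ≤ b / 2) {A : Set (Torus d)} (hA : MeasurableSet A)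
    (hgap : ∀ x ∈ A, b ≤ |g (ξ.1 + x) - g x|) :
    shiftExcess (fun x => c * g x) ξ + ENNReal.ofReal ((1 - c) * (b / 2)) * volume A ≤
      shiftExcess g ξ := by
  have hb : 0 ≤ b / 2 := (abs_nonneg _).trans hξ
  refine lintegral_add_const_mul_measure_le hA (fun x => ?_) fun x hx => ?_
  · rw [← mul_sub]
    exact ENNReal.ofReal_le_ofReal (evenExcess_mul_le hc _ _)
  · rw [← mul_sub, ← ENNReal.ofReal_add (evenExcess_nonneg _ _)
      (mul_nonneg (sub_nonneg.2 hc.2) hb)]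
    exact ENNReal.ofReal_le_ofReal (evenExcess_mul_add_le hc (hgap x hx) hξ)

lemma two_mul_interaction_subgraph_const_mul_add_le {k : Cyl d → ℝ≥0∞} (hk : Measurable k)
    (hk_even : ∀ ξ : Cyl d, k (-ξ.1, ξ.2) = k ξ) (hg : Measurable g) {b c : ℝ}
    (hc : c ∈ Icc (0 : ℝ) 1) {A : Set (Torus d)} (hA : MeasurableSet A) {U : Set (Cyl d)}
    (hU : MeasurableSet U) (hkU : ∀ ξ ∈ U, 1 ≤ k ξ) (hUb : ∀ ξ ∈ U, |ξ.2| ≤ b / 2)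
    (hgap : ∀ ξ ∈ U, ∀ x ∈ A, b ≤ |g (ξ.1 + x) - g x|) :
    2 * interaction volume k (subgraph d fun x => c * g x) (subgraph d fun x => c * g x)ᶜ +
        ENNReal.ofReal ((1 - c) * (b / 2)) * volume A * volume U ≤
      2 * interaction volume k (subgraph d g) (subgraph d g)ᶜ := by
  rw [two_mul_interaction_subgraph_compl hk hk_even hg,
    two_mul_interaction_subgraph_compl hk hk_even (hg.const_mul c)]
  refine lintegral_add_const_mul_measure_le hU (fun ξ => ?_) fun ξ hξ => ?_
  · gcongr
    exact shiftExcess_const_mul_le hc g ξ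
  · calc _ ≤ k ξ * shiftExcess (fun x => c * g x) ξ +
          k ξ * (ENNReal.ofReal ((1 - c) * (b / 2)) * volume A) :=
          add_le_add_right (le_mul_of_one_le_left zero_le (hkU ξ hξ)) _
      _ ≤ k ξ * shiftExcess g ξ := by
          rw [← mul_add]
          gcongr
          exact shiftExcess_const_mul_add_le hc (hUb ξ hξ) hA (hgap ξ hξ)

end Subgraph

section ShortShift

lemma exists_nsmul_eq_norm_le_addCircle {p : ℝ} {N : ℕ} (hN : N ≠ 0) (v : AddCircle p) :
    ∃ w : AddCircle p, N • w = v ∧ ‖w‖ ≤ ‖v‖ / N := by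
  induction v using QuotientAddGroup.induction_on with | H t
  set t₀ : ℝ := t - round (p⁻¹ * t) * p with ht₀
  refine ⟨((t₀ / N : ℝ) : AddCircle p), ?_, ?_⟩
  · rw [← AddCircle.coe_nsmul, nsmul_eq_mul, mul_div_cancel₀ _ (Nat.cast_ne_zero.2 hN), ht₀,
      AddCircle.coe_sub, ← zsmul_eq_mul, AddCircle.coe_zsmul, AddCircle.coe_period, smul_zero,
      sub_zero]
  · calc ‖((t₀ / N : ℝ) : AddCircle p)‖ ≤ ‖t₀ / N‖ := QuotientAddGroup.norm_mk_le_norm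
      _ = ‖(t : AddCircle p)‖ / N := by
        rw [AddCircle.norm_eq, norm_div, Real.norm_eq_abs, RCLike.norm_natCast]

lemma exists_nsmul_eq_norm_le_torus {ι : Type*} [Fintype ι] {p : ℝ} {N : ℕ} (hN : N ≠ 0)
    (v : ι → AddCircle p) : ∃ w : ι → AddCircle p, N • w = v ∧ ‖w‖ ≤ ‖v‖ / N := by
  choose w hw_smul hw_norm using fun i => exists_nsmul_eq_norm_le_addCircle hN (v i)
  refine ⟨w, funext hw_smul, (pi_norm_le_iff_of_nonneg (by positivity)).2 fun i => ?_⟩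
  exact (hw_norm i).trans (by gcongr; exact norm_le_pi_norm v i)

lemma exists_div_le_succ_sub (f : ℕ → ℝ) {N : ℕ} (hN : N ≠ 0) :
    ∃ k, (f N - f 0) / N ≤ f (k + 1) - f k := by
  have sum_average_le : ∑ _k ∈ Finset.range N, (f N - f 0) / N ≤
      ∑ k ∈ Finset.range N, (f (k + 1) - f k) := by
    rw [Finset.sum_range_sub, Finset.sum_const, Finset.card_range, nsmul_eq_mul,
      mul_div_cancel₀ _ (Nat.cast_ne_zero.2 hN)]
  obtain ⟨k, -, hk⟩ :=
    Finset.exists_le_of_sum_le (Finset.nonempty_range_iff.2 hN) sum_average_le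
  exact ⟨k, hk⟩

variable {d : ℕ}

lemma exists_osc_eq_sub {g : Torus d → ℝ} (hg : Continuous g) : ∃ p q, osc d g = g p - g q := by
  obtain ⟨p, hp⟩ := (isCompact_range hg).sSup_mem (range_nonempty g)
  obtain ⟨q, hq⟩ := (isCompact_range hg).sInf_mem (range_nonempty g)
  exact ⟨p, q, by rw [osc, iSup, iInf, hp, hq]⟩

lemma norm_torus_le_one (v : Torus d) : ‖v‖ ≤ 1 :=
  (pi_norm_le_iff_of_nonneg zero_le_one).2 fun _ =>
    (AddCircle.norm_le_half_period 1 one_ne_zero).trans (by norm_num)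

lemma exists_osc_div_le_shift_sub {g : Torus d → ℝ} (hg : Continuous g) {N : ℕ} (hN : N ≠ 0) :
    ∃ p w : Torus d, ‖w‖ ≤ 1 / N ∧ osc d g / N ≤ g (w + p) - g p := by
  obtain ⟨p, q, hosc⟩ := exists_osc_eq_sub hg
  obtain ⟨w, hw_smul, hw_norm⟩ := exists_nsmul_eq_norm_le_torus hN (p - q)
  obtain ⟨k, hk⟩ := exists_div_le_succ_sub (fun k => g (k • w + q)) hN
  refine ⟨k • w + q, w, hw_norm.trans (by gcongr; exact norm_torus_le_one _), ?_⟩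
  simpa only [hw_smul, sub_add_cancel, zero_smul, zero_add, ← hosc, succ_nsmul', add_assoc]
    using hk

lemma exists_uniform_shift_gap {ι : Type*} {g : ι → Torus d → ℝ} (hg : UniformEquicontinuous g)
    {δ : ℝ} (hδ : 0 < δ) {V : Set (Cyl d)} (hV : V ∈ 𝓝 0) :
    ∃ b η : ℝ, 0 < η ∧ η ≤ b / 2 ∧ ∀ i, δ ≤ osc d (g i) → ∃ p w : Torus d,
      Metric.ball w η ×ˢ Metric.ball 0 η ⊆ V ∧
      ∀ x ∈ Metric.ball p η, ∀ ξ ∈ Metric.ball w η, b ≤ g i (ξ + x) - g i x := by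
  obtain ⟨r, hr, hrV⟩ := Metric.mem_nhds_iff.1 hV
  obtain ⟨n, hn⟩ := exists_nat_one_div_lt (half_pos hr)
  set b : ℝ := δ / (n + 1) / 2 with hb
  have hb_pos : 0 < b := by positivity
  obtain ⟨s, hs, hgs⟩ := Metric.uniformEquicontinuous_iff.1 hg (b / 2) (half_pos hb_pos)
  obtain ⟨η, hη, hη_lt⟩ := exists_between (show 0 < min (r / 2) (min (s / 2) (b / 2)) by positivity)
  obtain ⟨hηr, hηs, hηb⟩ : η < r / 2 ∧ η < s / 2 ∧ η < b / 2 := by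
    simpa only [lt_min_iff] using hη_lt
  refine ⟨b, η, hη, hηb.le, fun i hi => ?_⟩
  obtain ⟨p, w, hw, hpw⟩ :=
    exists_osc_div_le_shift_sub (hg.uniformContinuous i).continuous n.succ_ne_zero
  push_cast at hw hpw
  refine ⟨p, w, fun ξ hξ => hrV ?_, fun x hx ξ hξ => ?_⟩
  · have hξ1 : ‖ξ.1‖ < r := by
      have := norm_add_le (ξ.1 - w) w
      rw [sub_add_cancel] at this
      linarith [mem_ball_iff_norm.1 hξ.1]
    have hξ2 : ‖ξ.2‖ < r := by linarith [mem_ball_zero_iff.1 hξ.2]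
    exact mem_ball_zero_iff.2 (max_lt hξ1 hξ2)
  · have hgap : 2 * b ≤ g i (w + p) - g i p := by
      have : δ / (n + 1) ≤ osc d (g i) / (n + 1) := by gcongr
      linarith
    have hx_near : |g i x - g i p| < b / 2 := hgs x p (by linarith [Metric.mem_ball.1 hx]) i
    have hξx_near : |g i (ξ + x) - g i (w + p)| < b / 2 :=
      hgs _ _ (by linarith [dist_add_add_le ξ x w p, Metric.mem_ball.1 hx, Metric.mem_ball.1 hξ]) i
    linarith [(abs_lt.1 hx_near).2, (abs_lt.1 hξx_near).1]

end ShortShift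

section ShortRange

variable {d : ℕ}

/-- The kernel of the short-range interaction `G0`. -/
def shortKernel (d : ℕ) : Cyl d → ℝ≥0∞ :=
  {ξ | pnorm d ξ < 1}.indicator fun ξ => ENNReal.ofReal (pnorm d ξ) ^ (-(d : ℝ))

lemma G0_eq_interaction (E F : Set (Cyl d)) :
    G0 d E F = interaction volume (shortKernel d) E F := rfl

lemma continuous_pnorm : Continuous (pnorm d) := by
  unfold pnorm
  fun_prop

lemma measurable_shortKernel : Measurable (shortKernel d) :=
  (continuous_pnorm.measurable.ennreal_ofReal.pow_const _).indicator
    (measurableSet_lt continuous_pnorm.measurable measurable_const)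

lemma shortKernel_neg_fst (ξ : Cyl d) : shortKernel d (-ξ.1, ξ.2) = shortKernel d ξ := by
  have pnorm_neg_fst : pnorm d (-ξ.1, ξ.2) = pnorm d ξ := by simp [pnorm]
  simp only [shortKernel, indicator, mem_ofPred_eq, pnorm_neg_fst]

lemma one_le_shortKernel {ξ : Cyl d} (hξ : pnorm d ξ < 1) : 1 ≤ shortKernel d ξ := by
  rw [shortKernel, indicator_of_mem (show ξ ∈ {ξ | pnorm d ξ < 1} from hξ),
    ENNReal.rpow_neg, ENNReal.one_le_inv]
  exact ENNReal.rpow_le_one (ENNReal.ofReal_le_one.2 hξ.le) d.cast_nonneg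

lemma setOf_pnorm_lt_one_mem_nhds_zero : {ξ : Cyl d | pnorm d ξ < 1} ∈ 𝓝 0 :=
  (isOpen_lt continuous_pnorm continuous_const).mem_nhds (by simp [pnorm])

lemma exists_G0_subgraph_const_mul_add_le {ι : Type*} {g : ι → Torus d → ℝ}
    (hg : UniformEquicontinuous g) {δ : ℝ} (hδ : 0 < δ) :
    ∃ C : ℝ, 0 < C ∧ ∀ i, δ ≤ osc d (g i) → ∀ ε ∈ Icc (0 : ℝ) 1,
      G0 d (subgraph d fun x => (1 - ε) * g i x) (subgraph d fun x => (1 - ε) * g i x)ᶜ +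
        ENNReal.ofReal (C * ε) ≤ G0 d (subgraph d (g i)) (subgraph d (g i))ᶜ := by
  obtain ⟨b, η, hη, hηb, hgap⟩ := exists_uniform_shift_gap hg hδ setOf_pnorm_lt_one_mem_nhds_zero
  set m : ℝ := volume.real (Metric.ball (0 : Torus d) η) with hm
  have hm_pos : 0 < m :=
    ENNReal.toReal_pos (Metric.measure_ball_pos _ _ hη).ne' (measure_ne_top _ _)
  have volume_ball (p : Torus d) : volume (Metric.ball p η) = ENNReal.ofReal m := by
    rw [hm, ofReal_measureReal, Measure.addHaar_ball_center]
  have hb : 0 < b := by linarith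
  refine ⟨b / 2 * m * (m * η), by positivity, fun i hi ε hε => ?_⟩
  obtain ⟨p, w, hU, hgap⟩ := hgap i hi
  have hgain := two_mul_interaction_subgraph_const_mul_add_le measurable_shortKernel
    shortKernel_neg_fst (hg.uniformContinuous i).continuous.measurable
    (c := 1 - ε) (b := b) ⟨by linarith [hε.2], by linarith [hε.1]⟩
    (A := Metric.ball p η) measurableSet_ball (U := Metric.ball w η ×ˢ Metric.ball 0 η)
    (measurableSet_ball.prod measurableSet_ball) (fun ξ hξ => one_le_shortKernel (hU hξ))
    (fun ξ hξ => (mem_ball_zero_iff.1 hξ.2).le.trans hηb)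
    (fun ξ hξ x hx => (hgap x hx ξ.1 hξ.1).trans (le_abs_self _))
  have gain_eq : ENNReal.ofReal ((1 - (1 - ε)) * (b / 2)) * volume (Metric.ball p η) *
      volume (Metric.ball w η ×ˢ Metric.ball (0 : ℝ) η) =
      2 * ENNReal.ofReal (b / 2 * m * (m * η) * ε) := by
    have hε0 := hε.1
    rw [Measure.volume_eq_prod, Measure.prod_prod, volume_ball, volume_ball, Real.volume_ball,
      sub_sub_cancel, ← ENNReal.ofReal_ofNat 2, ← ENNReal.ofReal_mul (by positivity),
      ← ENNReal.ofReal_mul (by positivity), ← ENNReal.ofReal_mul (by positivity),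
      ← ENNReal.ofReal_mul (by positivity)]
    congr 1
    ring
  rw [gain_eq, ← mul_add, ← G0_eq_interaction, ← G0_eq_interaction] at hgain
  exact (ENNReal.mul_le_mul_iff_right two_ne_zero ENNReal.ofNat_ne_top).1 hgain

end ShortRange

section LongRange

variable {d : ℕ} {f g : Torus d → ℝ}

/-- The kernel of the long-range interaction `J0`. -/
def longKernel (d : ℕ) : Cyl d → ℝ≥0∞ :=
  {ξ | 1 < pnorm d ξ}.indicator fun ξ => ENNReal.ofReal (pnorm d ξ) ^ (-(d : ℝ))

lemma J0_eq_interaction (E F : Set (Cyl d)) :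
    J0 d E F = interaction volume (longKernel d) E F := rfl

lemma Q0_anti (R₁ R₂ : ℝ) {E F : Set (Cyl d)} (hEF : E ⊆ F) : Q0 d R₁ R₂ F ≤ Q0 d R₁ R₂ E :=
  tsub_le_tsub_left (interaction_mono (k := longKernel d) (inter_subset_inter_left _ hEF)
    (inter_subset_inter_left _ hEF)) _

lemma Q0_preimage_add_vertical (R₁ R₂ τ : ℝ) (E : Set (Cyl d)) :
    Q0 d R₁ R₂ ((· + ((0, τ) : Cyl d)) ⁻¹' E) = Q0 d (R₁ + τ) (R₂ + τ) E := by
  have slab_eq : slab2 d R₁ R₂ = (· + ((0, τ) : Cyl d)) ⁻¹' slab2 d (R₁ + τ) (R₂ + τ) := by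
    ext x
    simp [slab2]
  simp only [Q0, slab_eq, ← preimage_inter, J0_eq_interaction, interaction_preimage_add_right]

lemma Q0_subgraph_le_of_le_add {τ : ℝ} (hgf : ∀ x, g x ≤ f x + τ) (R₁ R₂ : ℝ) :
    Q0 d R₁ R₂ (subgraph d f) ≤ Q0 d (R₁ + τ) (R₂ + τ) (subgraph d g) := by
  rw [← Q0_preimage_add_vertical]
  refine Q0_anti R₁ R₂ fun x hx => ?_
  have hx : x.2 + τ ≤ g (x.1 + 0) := hx
  rw [add_zero] at hx
  exact le_of_add_le_add_right (hx.trans (hgf x.1))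

lemma limsup_Q0_subgraph_const_mul_le (hg : BddAbove (range g)) {c : ℝ}
    (hc : c ∈ Icc (0 : ℝ) 1) :
    limsup (fun R : ℝ => Q0 d (-R) (⨆ x, c * g x) (subgraph d fun x => c * g x)) atTop ≤
      limsup (fun R : ℝ => Q0 d (-R) (⨆ x, g x) (subgraph d g)) atTop := by
  set M := ⨆ x, g x with hM
  rw [← Real.mul_iSup_of_nonneg hc.1, ← hM]
  have le_shifted (x : Torus d) : g x ≤ c * g x + (1 - c) * M := by
    have : (1 - c) * g x ≤ (1 - c) * M :=
      mul_le_mul_of_nonneg_left (le_ciSup hg x) (sub_nonneg.2 hc.2)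
    linarith
  calc limsup (fun R : ℝ => Q0 d (-R) (c * M) (subgraph d fun x => c * g x)) atTop
      ≤ limsup ((fun R : ℝ => Q0 d (-R) M (subgraph d g)) ∘ fun R => R - (1 - c) * M) atTop := by
        refine limsup_le_limsup (Eventually.of_forall fun R => ?_)
        have hQ0 := Q0_subgraph_le_of_le_add le_shifted (-R) (c * M)
        rwa [show -R + (1 - c) * M = -(R - (1 - c) * M) by ring,
          show c * M + (1 - c) * M = M by ring] at hQ0
    _ ≤ limsup (fun R : ℝ => Q0 d (-R) M (subgraph d g)) atTop :=
        (tendsto_atTop_add_const_right _ _ tendsto_id).limsup_comp_le_limsup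

end LongRange

section Perimeter

variable {d : ℕ} {g : Torus d → ℝ}

lemma subgraph_subset_setOf_lt_iff (ρ : ℝ) : subgraph d g ⊆ {x : Cyl d | x.2 < ρ} ↔ ∀ x, g x < ρ :=
  ⟨fun h x => h (show ((x, g x) : Cyl d) ∈ subgraph d g from le_refl (g x)),
    fun h x hx => lt_of_le_of_lt hx (h x.1)⟩

lemma bddTop_subgraph (hg : BddAbove (range g)) : BddTop d (subgraph d g) := by
  obtain ⟨M, hM⟩ := hg
  exact ⟨M + 1, (subgraph_subset_setOf_lt_iff _).2 fun x =>
    (hM (mem_range_self x)).trans_lt (lt_add_one M)⟩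

lemma rhoSup_subgraph (hg : BddAbove (range g)) : rhoSup d (subgraph d g) = ⨆ x, g x := by
  simp only [rhoSup, subgraph_subset_setOf_lt_iff]
  refine csInf_eq_of_forall_ge_of_forall_gt_exists_lt ?_ ?_ ?_
  · exact ⟨(⨆ x, g x) + 1, fun x => (le_ciSup hg x).trans_lt (lt_add_one _)⟩
  · exact fun ρ hρ => ciSup_le fun x => (hρ x).le
  · intro ρ hρ
    obtain ⟨ρ', hlt, hρ'⟩ := exists_between hρ
    exact ⟨ρ', fun x => (le_ciSup hg x).trans_lt hlt, hρ'⟩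

lemma P0_subgraph (hg : BddAbove (range g)) :
    P0 d (subgraph d g) = G0 d (subgraph d g) (subgraph d g)ᶜ +
      limsup (fun R : ℝ => Q0 d (-R) (⨆ x, g x) (subgraph d g)) atTop := by
  have subgraph_ne_empty : subgraph d g ≠ ∅ :=
    Nonempty.ne_empty ⟨(0, g 0), show g 0 ≤ g 0 from le_rfl⟩
  rw [P0, if_neg subgraph_ne_empty, if_pos (bddTop_subgraph hg), rhoSup_subgraph hg]

end Perimeter

theorem P0_assumptionH_general (d : ℕ) {ι : Type*} {g : ι → Torus d → ℝ}
    (hg : UniformEquicontinuous g) {δ : ℝ} (hδ : 0 < δ) :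
    ∃ C : ℝ, 0 < C ∧ ∀ i, δ ≤ osc d (g i) → ∀ ε ∈ Icc (0 : ℝ) 1,
      P0 d (subgraph d fun x => (1 - ε) * g i x) + ENNReal.ofReal (C * ε) ≤
        P0 d (subgraph d (g i)) := by
  obtain ⟨C, hC, hG0⟩ := exists_G0_subgraph_const_mul_add_le hg hδ
  refine ⟨C, hC, fun i hi ε hε => ?_⟩
  have hgi : Continuous (g i) := (hg.uniformContinuous i).continuous
  rw [P0_subgraph (isCompact_range hgi).bddAbove,
    P0_subgraph (isCompact_range (hgi.const_mul (1 - ε))).bddAbove, add_right_comm]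
  exact add_le_add (hG0 i hi ε hε) (limsup_Q0_subgraph_const_mul_le
    (isCompact_range hgi).bddAbove ⟨by linarith [hε.2], by linarith [hε.1]⟩)

/-- The 0-fractional perimeter satisfies assumption (H). -/
theorem P0_assumptionH (d : ℕ) (hd : 2 ≤ d) (L δ : ℝ) (hL : 0 < L) (hδ : 0 < δ) :
    ∃ ε₀ ∈ Set.Ioo (0:ℝ) 1, ∃ C : ℝ, 0 < C ∧
      ∀ g : Torus d → ℝ, LipschitzWith (Real.toNNReal L) g → δ ≤ osc d g →
        ∀ ε : ℝ, 0 < ε → ε ≤ ε₀ →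
          P0 d (subgraph d (fun x => (1 - ε) * g x)) + ENNReal.ofReal (C * ε)
            ≤ P0 d (subgraph d g) := by
  obtain ⟨C, hC, hP0⟩ := P0_assumptionH_general d (LipschitzWith.uniformEquicontinuous
    (fun g : {g : Torus d → ℝ // LipschitzWith (Real.toNNReal L) g} => g.1) _ Subtype.prop) hδ
  exact ⟨1 / 2, by norm_num, C, hC, fun g hg hosc ε hε hε₀ =>
    hP0 ⟨g, hg⟩ hosc ε ⟨hε.le, by linarith⟩⟩
end
end
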